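/- Let Ω ⊂ ℝⁿ be a bounded domain with the normalization B̄(x0,1) ⊆ Ω and d̂(x0) ≥ 15, let μ0 be a nontrivial finite positive Radon measure on Ω with d_Ω̂ ∈ L¹(μ0), and let (γ_y)_{y∈Ω̂} be a path system. Then ∫_Ω ω(x) d̂(x)^{−n+1} dx < +∞, where ω(x) := μ0({y ∈ Ω : ∃ t ∈ [0,1] with |γ_y(t) − x| ≤ d̂(x)/2}) and the integral is with respect to Lebesgue measure. -/

import Mathlib

open MeasureTheory Metric Set
open scoped RealInnerProductSpace ENNReal NNReal

noncomputable section

/-- `ℝⁿ` as a Euclidean space. -/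
abbrev En (n : ℕ) := EuclideanSpace ℝ (Fin n)

/-- The geodesic distance, within the set `U`, from the point `x` to the base point `x0`:
the infimum of the lengths (total variations) of rectifiable curves joining `x` to `x0`
inside `U` (non-rectifiable curves have infinite length, so they do not affect the
infimum). -/
def geoDist {X : Type*} [PseudoEMetricSpace X] (U : Set X) (x0 x : X) : ℝ≥0∞ :=
  ⨅ (γ : ℝ → X) (_ : ContinuousOn γ (Set.Icc 0 1)) (_ : Set.MapsTo γ (Set.Icc 0 1) U)
    (_ : γ 0 = x) (_ : γ 1 = x0), eVariationOn γ (Set.Icc 0 1)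

/-- The open measurable cover `Ω̂` associated with a measurable cover `Ω̃`:
`Ω̂ = {x ∈ Ω̃ : dist(x, ℝⁿ \ Ω̃) > 0}`. -/
def hatSet {n : ℕ} (Ot : Set (En n)) : Set (En n) :=
  {x ∈ Ot | 0 < Metric.infDist x Otᶜ}

/-- A Bogovskii path system on `Ω̂ = U`: a measurable family of rectifiable curves
`γ_y` joining each `y ∈ U` to the base point `x0` inside `U`, with Ahlfors-type
length bounds and uniform interiority. -/
structure PathSystem {n : ℕ} (Ω U : Set (En n)) (x0 : En n) : Type where
  γ : En n → ℝ → En n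
  contOn : ∀ y ∈ U, ContinuousOn (γ y) (Set.Icc 0 1)
  mapsTo : ∀ y ∈ U, ∀ t ∈ Set.Icc (0:ℝ) 1, γ y t ∈ U
  start : ∀ y ∈ U, γ y 0 = y
  ends : ∀ y ∈ U, γ y 1 = x0
  rectifiable : ∀ y ∈ U, eVariationOn (γ y) (Set.Icc 0 1) < ⊤
  meas : Measurable fun q : ℝ × En n => γ q.2 q.1
  C : ℝ
  Cpos : 0 < C
  ball_len : ∀ x ∈ Ω, ∀ y ∈ Ω, ∀ r : ℝ, r ≤ Metric.infDist x Uᶜ / 2 →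
    eVariationOn (γ y) {t ∈ Set.Icc (0:ℝ) 1 | γ y t ∈ Metric.ball x r} ≤
      ENNReal.ofReal (C * r)
  total_len : ∀ y ∈ U, eVariationOn (γ y) (Set.Icc 0 1) ≤
      ENNReal.ofReal C * geoDist U x0 y
  unif : ∃ ε0 : ℝ, 0 < ε0 ∧ ∀ ε : ℝ, 0 < ε → ε < ε0 → ∃ δ : ℝ, 0 < δ ∧
      ∀ y ∈ U, ε < Metric.infDist y Uᶜ →
        ∀ t ∈ Set.Icc (0:ℝ) 1, δ < Metric.infDist (γ y t) Uᶜ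

/-- The localized Riesz potential `I₁μ0(x) = ∫_Ω |x − y|^{1−n} dμ0(y)` (with value `∞`
allowed). -/
def I1 {n : ℕ} (μ0 : MeasureTheory.Measure (En n)) (Ω : Set (En n)) (x : En n) : ℝ≥0∞ :=
  ∫⁻ y in Ω, (edist x y) ^ ((1:ℝ) - n) ∂μ0

/-- `ω(x) = μ0({y ∈ Ω : ∃ t ∈ [0,1], |γ_y(t) − x| ≤ d̂(x)/2})`. -/
def omegaFn {n : ℕ} (μ0 : MeasureTheory.Measure (En n)) (Ω U : Set (En n))
    (γ : En n → ℝ → En n) (x : En n) : ℝ≥0∞ :=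
  μ0 {y ∈ Ω | ∃ t ∈ Set.Icc (0:ℝ) 1, dist (γ y t) x ≤ Metric.infDist x Uᶜ / 2}

/-- The weight `w0(x) = I₁μ0(x) + ω(x) d̂(x)^{1−n}`. -/
def wZero {n : ℕ} (μ0 : MeasureTheory.Measure (En n)) (Ω U : Set (En n))
    (γ : En n → ℝ → En n) (x : En n) : ℝ≥0∞ :=
  I1 μ0 Ω x + omegaFn μ0 Ω U γ x * (ENNReal.ofReal (Metric.infDist x Uᶜ)) ^ ((1:ℝ) - n)

lemma aux_step {n : ℕ} (hn : 1 ≤ n) (d : En n → ℝ) (hd : ∀ x y, d x ≤ d y + dist x y)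
    (hdc : Continuous d) (z : En n) (hz : 0 < d z) (A : Set (En n))
    (hA : ∀ x ∈ A, ∃ p, dist p z ≤ d z / 4 ∧ dist p x < 2 / 3 * d x) :
    ∫⁻ x in A, ENNReal.ofReal (d x) ^ ((1:ℝ) - n) ≤
      (ENNReal.ofReal (9/20) ^ ((1:ℝ) - n) * ENNReal.ofReal (3 ^ n) *
        volume (Metric.ball (0 : En n) 1)) * ENNReal.ofReal (d z) := by
  have hsub : A ⊆ Metric.ball z (3 * d z) ∩ {x | 9 / 20 * d z ≤ d x} := by
    intro x hx
    obtain ⟨p, h1, h2⟩ := hA x hx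
    have a1 := hd x p
    have a2 := hd p z
    have a3 := hd z p
    have a4 := hd p x
    rw [dist_comm x p] at a1
    rw [dist_comm z p] at a3
    have a5 := dist_triangle x p z
    rw [dist_comm x p] at a5
    refine ⟨?_, ?_⟩
    · rw [Metric.mem_ball]; linarith
    · simp only [mem_ofPred_eq]; linarith
  have hn' : ((1:ℝ) - n) ≤ 0 := by
    have : (1:ℝ) ≤ n := by exact_mod_cast hn
    linarith
  calc ∫⁻ x in A, ENNReal.ofReal (d x) ^ ((1:ℝ) - n)
      ≤ ∫⁻ x in Metric.ball z (3 * d z) ∩ {x | 9 / 20 * d z ≤ d x},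
          ENNReal.ofReal (d x) ^ ((1:ℝ) - n) := lintegral_mono_set hsub
    _ ≤ ∫⁻ x in Metric.ball z (3 * d z) ∩ {x | 9 / 20 * d z ≤ d x},
          ENNReal.ofReal (9 / 20 * d z) ^ ((1:ℝ) - n) := by
        apply setLIntegral_mono' 
        · exact measurableSet_ball.inter (isClosed_le continuous_const hdc).measurableSet
        · intro x hx
          have h := ENNReal.rpow_le_rpow (z := -((1:ℝ) - n)) (ENNReal.ofReal_le_ofReal hx.2) (by linarith)
          rw [ENNReal.rpow_neg, ENNReal.rpow_neg] at h
          exact ENNReal.inv_le_inv.1 h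
    _ ≤ ENNReal.ofReal (9 / 20 * d z) ^ ((1:ℝ) - n) * volume (Metric.ball z (3 * d z)) := by
        rw [setLIntegral_const]
        gcongr
        exact inter_subset_left
    _ = _ := by
        rw [Measure.addHaar_ball_of_pos _ _ (by positivity), finrank_euclideanSpace_fin,
          ENNReal.ofReal_mul (by norm_num), mul_pow, ENNReal.ofReal_mul (by positivity),
          ENNReal.mul_rpow_of_ne_top (by simp) (by simp)]
        have : ENNReal.ofReal (d z) ^ ((1:ℝ) - n) * ENNReal.ofReal (d z ^ n) =
            ENNReal.ofReal (d z) := by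
          rw [ENNReal.ofReal_pow hz.le, ← ENNReal.rpow_natCast, ← ENNReal.rpow_add]
          · simp
          · simpa using hz
          · simp
        calc _ = (ENNReal.ofReal (9/20) ^ ((1:ℝ) - n) * ENNReal.ofReal (3 ^ n) *
              volume (Metric.ball (0 : En n) 1)) *
              (ENNReal.ofReal (d z) ^ ((1:ℝ) - n) * ENNReal.ofReal (d z ^ n)) := by ring
          _ = _ := by rw [this]

lemma aux_ind {n : ℕ} (hn : 1 ≤ n) (d : En n → ℝ) (hd : ∀ x y, d x ≤ d y + dist x y)
    (hdc : Continuous d) (g : ℝ → En n) (hg : ContinuousOn g (Icc 0 1)) (δ M : ℝ) (hδ : 0 < δ)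
    (hdg : ∀ t ∈ Icc (0:ℝ) 1, δ ≤ d (g t)) (hM : ∀ t ∈ Icc (0:ℝ) 1, d (g t) ≤ M) (c : ℝ≥0∞)
    (hc : c = ENNReal.ofReal (9/20) ^ ((1:ℝ) - n) * ENNReal.ofReal (3 ^ n) *
        volume (Metric.ball (0 : En n) 1)) (k : ℕ) : ∀ a ∈ Icc (0:ℝ) 1,
    eVariationOn g (Icc a 1) ≤ k * ENNReal.ofReal (δ / 4) → 
    ∫⁻ x in {x | ∃ t ∈ Icc a 1, dist (g t) x < 2 / 3 * d x}, ENNReal.ofReal (d x) ^ ((1:ℝ) - n) ≤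
      c * (4 * eVariationOn g (Icc a 1) + ENNReal.ofReal M) := by
  induction k with
  | zero =>
    intro a ha hv
    have hv0 : eVariationOn g (Icc a 1) = 0 := by simpa using hv
    have h := aux_step hn d hd hdc (g a) (hδ.trans_le (hdg a ha))
      {x | ∃ t ∈ Icc a 1, dist (g t) x < 2 / 3 * d x} (by
        rintro x ⟨t, ht, hx⟩
        refine ⟨g t, ?_, hx⟩
        have h0 : edist (g t) (g a) ≤ eVariationOn g (Icc a 1) :=
          eVariationOn.edist_le g ht ⟨le_rfl, ha.2⟩
        rw [hv0, nonpos_iff_eq_zero, edist_eq_zero] at h0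
        rw [h0, dist_self]
        linarith [hdg a ha])
    rw [← hc] at h
    refine h.trans ?_
    gcongr
    exact (ENNReal.ofReal_le_ofReal (hM a ha)).trans le_add_self
  | succ k ih =>
    intro a ha hv
    have hda := hdg a ha
    have hgc : ContinuousOn g (Icc a 1) := hg.mono (Icc_subset_Icc_left ha.1)
    by_cases hex : ∃ t ∈ Icc a 1, d (g a) / 4 ≤ dist (g t) (g a)
    · have hcomp : IsCompact (Icc a 1 ∩ (fun t => dist (g t) (g a)) ⁻¹' (Ici (d (g a) / 4))) := by
        apply isCompact_Icc.of_isClosed_subset _ inter_subset_left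
        exact (show ContinuousOn (fun t => dist (g t) (g a)) (Icc a 1) from continuous_dist.comp_continuousOn
          (hgc.prodMk continuousOn_const)).preimage_isClosed_of_isClosed isClosed_Icc isClosed_Ici
      obtain ⟨t, ht, ht2⟩ := hex
      obtain ⟨b, ⟨hb, hb2⟩, hbl⟩ := hcomp.exists_isLeast ⟨t, ht, ht2⟩
      simp only [mem_preimage, mem_Ici] at hb2
      have hb01 : b ∈ Icc (0:ℝ) 1 := ⟨ha.1.trans hb.1, hb.2⟩
      have hsplit : eVariationOn g (Icc a b) + eVariationOn g (Icc b 1) =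
          eVariationOn g (Icc a 1) := by
        have := eVariationOn.Icc_add_Icc g (s := univ) hb.1 hb.2 (mem_univ b)
        simpa using this
      have hlen : ENNReal.ofReal (d (g a) / 4) ≤ eVariationOn g (Icc a b) := by
        refine le_trans ?_ (eVariationOn.edist_le g (x := b) (y := a) ⟨hb.1, le_rfl⟩ ⟨le_rfl, hb.1⟩)
        rw [edist_dist]
        exact ENNReal.ofReal_le_ofReal hb2
      have hv' : eVariationOn g (Icc b 1) ≤ k * ENNReal.ofReal (δ / 4) := by
        have h1 : ENNReal.ofReal (δ / 4) + eVariationOn g (Icc b 1) ≤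
            ENNReal.ofReal (δ / 4) + k * ENNReal.ofReal (δ / 4) := by
          calc _ ≤ eVariationOn g (Icc a b) + eVariationOn g (Icc b 1) := by
                gcongr
                exact (ENNReal.ofReal_le_ofReal (by linarith)).trans hlen
            _ ≤ _ := by
                rw [hsplit]
                refine hv.trans (le_of_eq ?_)
                push_cast
                ring
        exact (ENNReal.add_le_add_iff_left (by simp)).1 h1
      have h1 := ih b hb01 hv'
      have h2 := aux_step hn d hd hdc (g a) (hδ.trans_le hda)
        {x | ∃ t ∈ Ico a b, dist (g t) x < 2 / 3 * d x} (by
          rintro x ⟨t, ht, hx⟩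
          refine ⟨g t, ?_, hx⟩
          by_contra hcon
          have := hbl ⟨⟨ht.1, ht.2.le.trans hb.2⟩, (not_le.1 hcon).le⟩
          exact absurd ht.2 (not_lt.2 this))
      rw [← hc] at h2
      have hsub : {x | ∃ t ∈ Icc a 1, dist (g t) x < 2 / 3 * d x} ⊆
          {x | ∃ t ∈ Ico a b, dist (g t) x < 2 / 3 * d x} ∪
          {x | ∃ t ∈ Icc b 1, dist (g t) x < 2 / 3 * d x} := by
        rintro x ⟨t, ht, hx⟩
        rcases lt_or_ge t b with h | h
        · exact Or.inl ⟨t, ⟨ht.1, h⟩, hx⟩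
        · exact Or.inr ⟨t, ⟨h, ht.2⟩, hx⟩
      have h3 : ENNReal.ofReal (d (g a)) ≤ 4 * eVariationOn g (Icc a b) := by
        calc ENNReal.ofReal (d (g a)) = 4 * ENNReal.ofReal (d (g a) / 4) := by
              rw [show (4 : ℝ≥0∞) = ENNReal.ofReal 4 by simp, ← ENNReal.ofReal_mul (by norm_num)]
              congr 1; ring
          _ ≤ _ := by gcongr
      calc _ ≤ _ := lintegral_mono_set hsub
        _ ≤ _ := lintegral_union_le _ _ _
        _ ≤ c * ENNReal.ofReal (d (g a)) +
            c * (4 * eVariationOn g (Icc b 1) + ENNReal.ofReal M) := add_le_add h2 h1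
        _ ≤ c * (4 * eVariationOn g (Icc a b)) +
            c * (4 * eVariationOn g (Icc b 1) + ENNReal.ofReal M) := by gcongr
        _ = _ := by rw [← hsplit]; ring
    · push Not at hex
      have h := aux_step hn d hd hdc (g a) (hδ.trans_le hda)
        {x | ∃ t ∈ Icc a 1, dist (g t) x < 2 / 3 * d x} (by
          rintro x ⟨t, ht, hx⟩
          exact ⟨g t, (hex t ht).le, hx⟩)
      rw [← hc] at h
      refine h.trans ?_
      gcongr
      exact (ENNReal.ofReal_le_ofReal (hM a ha)).trans le_add_self

lemma aux_curve {n : ℕ} (hn : 1 ≤ n) (d : En n → ℝ) (hd : ∀ x y, d x ≤ d y + dist x y)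
    (hdc : Continuous d) (g : ℝ → En n) (hg : ContinuousOn g (Icc 0 1))
    (hdg : ∀ t ∈ Icc (0:ℝ) 1, 0 < d (g t)) (hv : eVariationOn g (Icc 0 1) < ⊤) (c : ℝ≥0∞)
    (hc : c = ENNReal.ofReal (9/20) ^ ((1:ℝ) - n) * ENNReal.ofReal (3 ^ n) *
        volume (Metric.ball (0 : En n) 1)) :
    ∫⁻ x in {x | ∃ t ∈ Icc 0 1, dist (g t) x < 2 / 3 * d x}, ENNReal.ofReal (d x) ^ ((1:ℝ) - n) ≤
      c * (5 * eVariationOn g (Icc 0 1) + ENNReal.ofReal (d (g 1))) := by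
  obtain ⟨t0, ht0, hmin⟩ := isCompact_Icc.exists_isMinOn (s := Icc (0:ℝ) 1) ⟨0, by simp⟩
    (hdc.comp_continuousOn hg)
  have hδ := hdg t0 ht0
  obtain ⟨k, hk⟩ := ENNReal.exists_nat_mul_gt (a := ENNReal.ofReal (d (g t0) / 4))
    (b := eVariationOn g (Icc 0 1)) (by simpa using hδ) hv.ne
  have h := aux_ind hn d hd hdc g hg (d (g t0)) (d (g 1) + (eVariationOn g (Icc 0 1)).toReal) hδ
    (fun t ht => hmin ht) (fun t ht => by
      refine (hd (g t) (g 1)).trans ?_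
      gcongr
      have := eVariationOn.edist_le g ht (y := 1) (by simp)
      rw [edist_dist] at this
      exact (ENNReal.ofReal_le_iff_le_toReal hv.ne).1 this) c hc k 0 (by simp) hk.le
  refine h.trans ?_
  rw [ENNReal.ofReal_add (hdg 1 (by simp)).le ENNReal.toReal_nonneg, ENNReal.ofReal_toReal hv.ne]
  apply le_of_eq
  ring

theorem main_aux (n : ℕ) (hn : 1 ≤ n) (Ω Ot U : Set (En n)) (hU : U = hatSet Ot)
    (hΩopen : IsOpen Ω) (hΩconn : IsConnected Ω) (hΩbdd : Bornology.IsBounded Ω)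
    (hcov : Ω ⊆ Ot) (hcovnull : volume (Ot \ Ω) = 0)
    (x0 : En n) (hx0 : x0 ∈ Ω)
    (hnorm1 : Metric.closedBall x0 1 ⊆ Ω)
    (hnorm2 : 15 ≤ Metric.infDist x0 Uᶜ)
    (P : PathSystem Ω U x0)
    (μ0 : Measure (En n)) [IsFiniteMeasure μ0] (hμ0ne : μ0 ≠ 0) (hμ0supp : μ0 Ωᶜ = 0)
    (hgeo : (∫⁻ x in Ω, geoDist U x0 x ∂μ0) < ⊤) :
    (∫⁻ x in Ω, omegaFn μ0 Ω U P.γ x *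
      (ENNReal.ofReal (Metric.infDist x Uᶜ)) ^ ((1:ℝ) - n)) < ⊤ := by
  have _ := hn
  set d : En n → ℝ := fun x => Metric.infDist x Uᶜ with hddef
  have hd : ∀ x y, d x ≤ d y + dist x y := fun x y => Metric.infDist_le_infDist_add_dist
  have hdc : Continuous d := Metric.continuous_infDist_pt _
  have hUne : (Uᶜ).Nonempty := by
    by_contra h
    rw [not_nonempty_iff_eq_empty] at h
    rw [h, Metric.infDist_empty] at hnorm2
    linarith
  have hUt : U ⊆ Ot := fun x hx => by
    rw [hU] at hx; exact hx.1
  have hOtne : (Otᶜ).Nonempty := by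
    by_contra h
    rw [not_nonempty_iff_eq_empty] at h
    have : U = ∅ := by
      rw [hU]; ext x; simp [hatSet, h]
    have h2 : Metric.infDist x0 Uᶜ = 0 := by
      rw [this, compl_empty]
      exact Metric.infDist_zero_of_mem (mem_univ _)
    linarith
  have hUopen : IsOpen U := by
    have : U = {x | 0 < Metric.infDist x Otᶜ} := by
      ext x
      rw [hU]
      refine ⟨fun h => h.2, fun h => ⟨?_, h⟩⟩
      by_contra hx
      have h2 : Metric.infDist x Otᶜ = 0 := Metric.infDist_zero_of_mem hx
      simp only [mem_ofPred_eq] at h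
      linarith
    rw [this]
    exact isOpen_lt continuous_const (Metric.continuous_infDist_pt _)
  have hdpos : ∀ x ∈ U, 0 < d x := by
    intro x hx
    have := (hUopen.isClosed_compl.notMem_iff_infDist_pos hUne (x := x)).1 (by simpa using hx)
    exact this
  have hΩU : Ω ⊆ U := by
    intro x hx
    rw [hU]
    refine ⟨hcov hx, ?_⟩
    obtain ⟨ε, hε, hb⟩ := Metric.isOpen_iff.1 hΩopen x hx
    refine hε.trans_le ((Metric.le_infDist hOtne).2 ?_)
    intro y hy
    by_contra hlt
    exact hy (hcov (hb (by rw [Metric.mem_ball, dist_comm]; exact not_le.1 hlt)))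
  obtain ⟨D, hDc, hDd⟩ := TopologicalSpace.exists_countable_dense (Icc (0:ℝ) 1)
  set S : Set (En n × En n) := ⋃ t ∈ D, {q | dist (P.γ q.2 (t:ℝ)) q.1 < 2 / 3 * d q.1} with hS
  have hSm : MeasurableSet S := by
    refine MeasurableSet.biUnion hDc fun t _ => ?_
    have h1 : Measurable fun q : En n × En n => P.γ q.2 (t:ℝ) :=
      P.meas.comp (measurable_const.prodMk measurable_snd)
    exact measurableSet_lt (h1.dist measurable_fst)
      ((hdc.measurable.comp measurable_fst).const_mul _)
  have hwm : Measurable fun x : En n => ENNReal.ofReal (d x) ^ ((1:ℝ) - n) :=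
    (hdc.measurable.ennreal_ofReal).pow_const _
  set c : ℝ≥0∞ := ENNReal.ofReal (9/20) ^ ((1:ℝ) - n) * ENNReal.ofReal (3 ^ n) *
        volume (Metric.ball (0 : En n) 1) with hc
  have hct : c ≠ ⊤ := by
    refine ENNReal.mul_ne_top (ENNReal.mul_ne_top ?_ (by simp)) measure_ball_lt_top.ne
    exact ENNReal.rpow_ne_top_of_ne_zero (by norm_num) (by simp)
  set F : En n → En n → ℝ≥0∞ := fun x y =>
    S.indicator (fun q => ENNReal.ofReal (d q.1) ^ ((1:ℝ) - n)) (x, y) with hF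
  have hFm : Measurable (Function.uncurry F) :=
    (hwm.comp measurable_fst).indicator hSm
  have hx : ∀ x ∈ Ω, omegaFn μ0 Ω U P.γ x * ENNReal.ofReal (d x) ^ ((1:ℝ) - n) ≤
      ∫⁻ y in Ω, F x y ∂μ0 := by
    intro x hx
    have hT : MeasurableSet {y | (x, y) ∈ S} := measurable_prodMk_left hSm
    have hFe : F x = {y | (x, y) ∈ S}.indicator
        (fun _ => ENNReal.ofReal (d x) ^ ((1:ℝ) - n)) := by
      ext y
      rfl
    rw [hFe, lintegral_indicator_const hT, mul_comm]
    gcongr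
    rw [Measure.restrict_apply hT]
    apply measure_mono
    rintro y ⟨hy, t, ht, hty⟩
    refine ⟨?_, hy⟩
    have hcy : Continuous fun s : Icc (0:ℝ) 1 => dist (P.γ y (s:ℝ)) x :=
      (continuousOn_iff_continuous_domRestrict.1 (P.contOn y (hΩU hy))).dist continuous_const
    have hdx := hdpos x (hΩU hx)
    obtain ⟨s, hs1, hs2⟩ := hDd.exists_mem_open (isOpen_lt hcy (continuous_const (y := 2 / 3 * d x)))
      ⟨⟨t, ht⟩, by
        have : dist (P.γ y t) x ≤ d x / 2 := hty
        simp only [mem_ofPred_eq]; linarith⟩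
    simp only [hS, mem_ofPred_eq, mem_iUnion]
    exact ⟨s, hs1, hs2⟩
  have hy : ∀ y ∈ Ω, ∫⁻ x in Ω, F x y ≤
      c * 5 * ENNReal.ofReal P.C * geoDist U x0 y + c * ENNReal.ofReal (d x0) := by
    intro y hy
    have hyU := hΩU hy
    have h := aux_curve hn d hd hdc (P.γ y) (P.contOn y hyU)
      (fun t ht => hdpos _ (P.mapsTo y hyU t ht)) (P.rectifiable y hyU) c hc
    rw [P.ends y hyU] at h
    have hT : MeasurableSet {x | (x, y) ∈ S} := measurable_prodMk_right hSm
    have hFe : (fun x => F x y) = {x | (x, y) ∈ S}.indicator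
        (fun x => ENNReal.ofReal (d x) ^ ((1:ℝ) - n)) := by
      ext x
      rfl
    calc ∫⁻ x in Ω, F x y ≤ ∫⁻ x, F x y := setLIntegral_le_lintegral _ _
      _ = ∫⁻ x in {x | (x, y) ∈ S}, ENNReal.ofReal (d x) ^ ((1:ℝ) - n) := by
        rw [hFe, lintegral_indicator hT]
      _ ≤ _ := lintegral_mono_set (by
        intro x hx
        simp only [hS, mem_ofPred_eq, mem_iUnion] at hx
        obtain ⟨s, _, hs2⟩ := hx
        exact ⟨s, s.2, hs2⟩)
      _ ≤ _ := h
      _ ≤ c * (5 * (ENNReal.ofReal P.C * geoDist U x0 y) + ENNReal.ofReal (d x0)) := by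
        gcongr
        exact P.total_len y hyU
      _ = _ := by ring
  calc _ ≤ ∫⁻ x in Ω, ∫⁻ y in Ω, F x y ∂μ0 := setLIntegral_mono' hΩopen.measurableSet hx
    _ = ∫⁻ y in Ω, ∫⁻ x in Ω, F x y ∂volume ∂μ0 := lintegral_lintegral_swap hFm.aemeasurable
    _ ≤ ∫⁻ y in Ω, (c * 5 * ENNReal.ofReal P.C * geoDist U x0 y + c * ENNReal.ofReal (d x0)) ∂μ0 :=
      setLIntegral_mono' hΩopen.measurableSet hy
    _ = c * 5 * ENNReal.ofReal P.C * (∫⁻ y in Ω, geoDist U x0 y ∂μ0) +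
        c * ENNReal.ofReal (d x0) * μ0 Ω := by
      rw [lintegral_add_right _ measurable_const, lintegral_const_mul' _ _ (by finiteness),
        setLIntegral_const]
    _ < ⊤ := by
      have := hgeo.ne
      finiteness

/-- (Lemma 2.3.) Under the normalization `B̄(x0,1) ⊆ Ω`, `d̂(x0) ≥ 15`,
given a path system and a nontrivial finite positive Radon measure `μ0` on `Ω` with
`d_Ω̂ ∈ L¹(μ0)`, one has `∫_Ω ω(x) d̂(x)^{1−n} dx < ∞`. -/
theorem stmt_6 (n : ℕ) (hn : 1 ≤ n) (Ω Ot : Set (En n))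
    (hΩopen : IsOpen Ω) (hΩconn : IsConnected Ω) (hΩbdd : Bornology.IsBounded Ω)
    (hcov : Ω ⊆ Ot) (hcovnull : volume (Ot \ Ω) = 0)
    (x0 : En n) (hx0 : x0 ∈ Ω)
    (hnorm1 : Metric.closedBall x0 1 ⊆ Ω)
    (hnorm2 : 15 ≤ Metric.infDist x0 (hatSet Ot)ᶜ)
    (P : PathSystem Ω (hatSet Ot) x0)
    (μ0 : Measure (En n)) [IsFiniteMeasure μ0] (hμ0ne : μ0 ≠ 0) (hμ0supp : μ0 Ωᶜ = 0)
    (hgeo : (∫⁻ x in Ω, geoDist (hatSet Ot) x0 x ∂μ0) < ⊤) :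
    (∫⁻ x in Ω, omegaFn μ0 Ω (hatSet Ot) P.γ x *
      (ENNReal.ofReal (Metric.infDist x (hatSet Ot)ᶜ)) ^ ((1:ℝ) - n)) < ⊤ := by
  exact main_aux n hn Ω Ot (hatSet Ot) rfl hΩopen hΩconn hΩbdd hcov hcovnull x0 hx0 hnorm1 hnorm2
    P μ0 hμ0ne hμ0supp hgeo
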